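/- arXiv:0903.1014 — 2 statements merged into one kernel-verified Lean document; each statement's English description precedes it below -/
import Mathlib

section
/- Let L : ℝ³ → ℝ be a smooth Lagrangian in the variables (x,u,p), let ξ, η, R : ℝ² → ℝ be smooth functions of (x,u), and let λ : ℝ³ → ℝ be a smooth function of (x,u,p). Define D_xF(x,u,p) = ∂_xF(x,u) + p·∂_uF(x,u), η₁ = D_xη − p·D_xξ + λ·(η − ξ·p), and suppose the divergence λ-variational symmetry condition ξ·∂_xL + η·∂_uL + η₁·∂_pL + L·(D_xξ + λ·ξ) = D_xR + λ·R holds identically on ℝ³. Define I(x,u,p) = ξ(x,u)·(L(x,u,p) − p·∂_pL(x,u,p)) + η(x,u)·∂_pL(x,u,p) − R(x,u). Let J ⊆ ℝ be an open interval and let u : J → ℝ be twice differentiable with continuous derivative, solving the Euler-Lagrange equation d/dx[∂_pL(x,u(x),u'(x))] = ∂_uL(x,u(x),u'(x)) on J. If I(x₀,u(x₀),u'(x₀)) = 0 for some x₀ ∈ J, then I(x,u(x),u'(x)) = 0 for all x ∈ J. -/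
/-- Truncated total derivative `D_x F (x,u,p) = ∂_x F(x,u) + p ∂_u F(x,u)`. -/
noncomputable def Dx (F : ℝ → ℝ → ℝ) (x u p : ℝ) : ℝ :=
  deriv (fun t => F t u) x + p * deriv (fun v => F x v) u

/-- Partial derivative of the Lagrangian with respect to `x`. -/
noncomputable def Lx (L : ℝ → ℝ → ℝ → ℝ) (x u p : ℝ) : ℝ := deriv (fun t => L t u p) x

/-- Partial derivative of the Lagrangian with respect to `u`. -/
noncomputable def Lu (L : ℝ → ℝ → ℝ → ℝ) (x u p : ℝ) : ℝ := deriv (fun v => L x v p) u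

/-- Partial derivative of the Lagrangian with respect to `p`. -/
noncomputable def Lp (L : ℝ → ℝ → ℝ → ℝ) (x u p : ℝ) : ℝ := deriv (fun q => L x u q) p

/-- First λ-prolonged coefficient `η₁ = D_x η − p D_x ξ + λ (η − ξ p)`. -/
noncomputable def eta1 (ξ η : ℝ → ℝ → ℝ) (lam : ℝ → ℝ → ℝ → ℝ) (x u p : ℝ) : ℝ :=
  Dx η x u p - p * Dx ξ x u p + lam x u p * (η x u - ξ x u * p)

/-- The Noether-type function `I = ξ (L − p ∂_p L) + η ∂_p L − R`. -/
noncomputable def NoetherI (L : ℝ → ℝ → ℝ → ℝ) (ξ η R : ℝ → ℝ → ℝ) (x u p : ℝ) : ℝ :=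
  ξ x u * (L x u p - p * Lp L x u p) + η x u * Lp L x u p - R x u

/-!
Along a solution of the Euler–Lagrange equation, the classical Noether computation gives
`dI/dx = ξ ∂ₓL + η ∂ᵤL + (D_x η - u' D_x ξ) ∂ₚL + L D_x ξ - D_x R`. The λ-symmetry condition differs
from the vanishing of this expression exactly by the terms carrying `λ`, and these add up to `λ I`.
Hence `dI/dx = -λ I`, a homogeneous linear equation, whose only solution vanishing at `x₀` is zero.
-/

open Set
open scoped Topology

theorem eqOn_of_hasDerivWithinAt_linear {E : Type*} [NormedAddCommGroup E] [NormedSpace ℝ E]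
    {J : Set ℝ} (hJ : J.OrdConnected) {A : ℝ → E →L[ℝ] E} (hA : ContinuousOn A J) {f g : ℝ → E}
    (hf : ∀ x ∈ J, HasDerivWithinAt f (A x (f x)) J x)
    (hg : ∀ x ∈ J, HasDerivWithinAt g (A x (g x)) J x)
    {x₀ : ℝ} (hx₀ : x₀ ∈ J) (hfg : f x₀ = g x₀) : EqOn f g J := by
  have lipschitz_Icc {a b : ℝ} (hab : Icc a b ⊆ J) :
      ∃ K, ∀ t ∈ Icc a b, LipschitzOnWith K (A t) univ := by
    obtain ⟨C, hC⟩ := isCompact_Icc.exists_bound_of_continuousOn (hA.mono hab)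
    refine ⟨C.toNNReal, fun t ht ↦ ((A t).lipschitz.weaken ?_).lipschitzOnWith⟩
    exact NNReal.le_toNNReal_of_coe_le (hC t ht)
  have hfc : ContinuousOn f J := fun x hx ↦ (hf x hx).continuousWithinAt
  have hgc : ContinuousOn g J := fun x hx ↦ (hg x hx).continuousWithinAt
  intro x hx
  rcases le_total x₀ x with hle | hle
  · have hsub : Icc x₀ x ⊆ J := hJ.out hx₀ hx
    obtain ⟨K, hK⟩ := lipschitz_Icc hsub
    have nhds_right : ∀ t ∈ Ico x₀ x, J ∈ 𝓝[≥] t := fun t ht ↦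
      hJ.mem_nhdsGE (hsub (Ico_subset_Icc_self ht)) hx ht.2
    exact ODE_solution_unique_of_mem_Icc_right (v := fun t ↦ A t)
      (fun t ht ↦ hK t (Ico_subset_Icc_self ht))
      (hfc.mono hsub)
      (fun t ht ↦ (hf t (hsub (Ico_subset_Icc_self ht))).mono_of_mem_nhdsWithin (nhds_right t ht))
      (fun _ _ ↦ mem_univ _) (hgc.mono hsub)
      (fun t ht ↦ (hg t (hsub (Ico_subset_Icc_self ht))).mono_of_mem_nhdsWithin (nhds_right t ht))
      (fun _ _ ↦ mem_univ _) hfg (right_mem_Icc.2 hle)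
  · have hsub : Icc x x₀ ⊆ J := hJ.out hx hx₀
    obtain ⟨K, hK⟩ := lipschitz_Icc hsub
    have nhds_left : ∀ t ∈ Ioc x x₀, J ∈ 𝓝[≤] t := fun t ht ↦
      hJ.mem_nhdsLE hx (hsub (Ioc_subset_Icc_self ht)) ht.1
    exact ODE_solution_unique_of_mem_Icc_left (v := fun t ↦ A t)
      (fun t ht ↦ hK t (Ioc_subset_Icc_self ht))
      (hfc.mono hsub)
      (fun t ht ↦ (hf t (hsub (Ioc_subset_Icc_self ht))).mono_of_mem_nhdsWithin (nhds_left t ht))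
      (fun _ _ ↦ mem_univ _) (hgc.mono hsub)
      (fun t ht ↦ (hg t (hsub (Ioc_subset_Icc_self ht))).mono_of_mem_nhdsWithin (nhds_left t ht))
      (fun _ _ ↦ mem_univ _) hfg (left_mem_Icc.2 hle)

section ChainRule

theorem Dx_eq_of_hasFDerivAt {F : ℝ → ℝ → ℝ} {x u : ℝ} {D : ℝ × ℝ →L[ℝ] ℝ}
    (hD : HasFDerivAt (fun z : ℝ × ℝ ↦ F z.1 z.2) D (x, u)) (p : ℝ) :
    Dx F x u p = D (1, p) := by
  have partial_x : deriv (fun t ↦ F t u) x = D (1, 0) :=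
    (hD.comp_hasDerivAt (f := fun t ↦ (t, u)) x
      ((hasDerivAt_id x).prodMk (hasDerivAt_const x u))).deriv
  have partial_u : deriv (fun w ↦ F x w) u = D (0, 1) :=
    (hD.comp_hasDerivAt (f := fun w ↦ (x, w)) u
      ((hasDerivAt_const u x).prodMk (hasDerivAt_id u))).deriv
  rw [Dx, partial_x, partial_u, ← smul_eq_mul, ← map_smul, ← map_add]
  simp

theorem Lx_eq_of_hasFDerivAt {L : ℝ → ℝ → ℝ → ℝ} {x u p : ℝ} {D : ℝ × ℝ × ℝ →L[ℝ] ℝ}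
    (hD : HasFDerivAt (fun z : ℝ × ℝ × ℝ ↦ L z.1 z.2.1 z.2.2) D (x, u, p)) :
    Lx L x u p = D (1, 0, 0) :=
  (hD.comp_hasDerivAt (f := fun t ↦ (t, u, p)) x
    ((hasDerivAt_id x).prodMk (hasDerivAt_const x (u, p)))).deriv

theorem Lu_eq_of_hasFDerivAt {L : ℝ → ℝ → ℝ → ℝ} {x u p : ℝ} {D : ℝ × ℝ × ℝ →L[ℝ] ℝ}
    (hD : HasFDerivAt (fun z : ℝ × ℝ × ℝ ↦ L z.1 z.2.1 z.2.2) D (x, u, p)) :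
    Lu L x u p = D (0, 1, 0) :=
  (hD.comp_hasDerivAt (f := fun w ↦ (x, w, p)) u
    ((hasDerivAt_const u x).prodMk ((hasDerivAt_id u).prodMk (hasDerivAt_const u p)))).deriv

theorem Lp_eq_of_hasFDerivAt {L : ℝ → ℝ → ℝ → ℝ} {x u p : ℝ} {D : ℝ × ℝ × ℝ →L[ℝ] ℝ}
    (hD : HasFDerivAt (fun z : ℝ × ℝ × ℝ ↦ L z.1 z.2.1 z.2.2) D (x, u, p)) :
    Lp L x u p = D (0, 0, 1) :=
  (hD.comp_hasDerivAt (f := fun q ↦ (x, u, q)) p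
    ((hasDerivAt_const p x).prodMk ((hasDerivAt_const p u).prodMk (hasDerivAt_id p)))).deriv

theorem differentiable_Lp {L : ℝ → ℝ → ℝ → ℝ}
    (hL : ContDiff ℝ 2 fun z : ℝ × ℝ × ℝ ↦ L z.1 z.2.1 z.2.2) :
    Differentiable ℝ fun z : ℝ × ℝ × ℝ ↦ Lp L z.1 z.2.1 z.2.2 := by
  have Lp_eq_fderiv : (fun z : ℝ × ℝ × ℝ ↦ Lp L z.1 z.2.1 z.2.2) =
      fun z ↦ fderiv ℝ (fun z : ℝ × ℝ × ℝ ↦ L z.1 z.2.1 z.2.2) z (0, 0, 1) :=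
    funext fun z ↦ Lp_eq_of_hasFDerivAt (hL.differentiable two_ne_zero z).hasFDerivAt
  have hfderiv : ContDiff ℝ 1 (fderiv ℝ fun z : ℝ × ℝ × ℝ ↦ L z.1 z.2.1 z.2.2) :=
    hL.fderiv_right (by norm_num)
  rw [Lp_eq_fderiv]
  exact (hfderiv.differentiable one_ne_zero).clm_apply (differentiable_const _)

variable {J : Set ℝ} {u v : ℝ → ℝ} {x p q : ℝ}

theorem hasDerivWithinAt_comp_graph {F : ℝ → ℝ → ℝ}
    (hF : DifferentiableAt ℝ (fun z : ℝ × ℝ ↦ F z.1 z.2) (x, u x))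
    (hu : HasDerivWithinAt u p J x) :
    HasDerivWithinAt (fun t ↦ F t (u t)) (Dx F x (u x) p) J x := by
  rw [Dx_eq_of_hasFDerivAt hF.hasFDerivAt]
  exact hF.hasFDerivAt.comp_hasDerivWithinAt (f := fun t ↦ (t, u t)) x
    ((hasDerivWithinAt_id x J).prodMk hu)

theorem hasDerivWithinAt_comp_jet {L : ℝ → ℝ → ℝ → ℝ}
    (hL : DifferentiableAt ℝ (fun z : ℝ × ℝ × ℝ ↦ L z.1 z.2.1 z.2.2) (x, u x, v x))
    (hu : HasDerivWithinAt u p J x) (hv : HasDerivWithinAt v q J x) :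
    HasDerivWithinAt (fun t ↦ L t (u t) (v t))
      (Lx L x (u x) (v x) + p * Lu L x (u x) (v x) + q * Lp L x (u x) (v x)) J x := by
  have hD := hL.hasFDerivAt
  refine (hD.comp_hasDerivWithinAt (f := fun t ↦ (t, u t, v t)) x
    ((hasDerivWithinAt_id x J).prodMk (hu.prodMk hv))).congr_deriv ?_
  rw [Lx_eq_of_hasFDerivAt hD, Lu_eq_of_hasFDerivAt hD, Lp_eq_of_hasFDerivAt hD,
    ← smul_eq_mul, ← smul_eq_mul, ← map_smul, ← map_smul, ← map_add, ← map_add]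
  simp

end ChainRule

/-- The divergence λ-variational symmetry condition for the vector field `ξ ∂ₓ + η ∂ᵤ` and the
Lagrangian `L`, with divergence term `R`, required at every point of the jet space. -/
def IsLambdaVariationalSymmetry (L lam : ℝ → ℝ → ℝ → ℝ) (ξ η R : ℝ → ℝ → ℝ) : Prop :=
  ∀ x u p : ℝ,
    ξ x u * Lx L x u p + η x u * Lu L x u p + eta1 ξ η lam x u p * Lp L x u p
      + L x u p * (Dx ξ x u p + lam x u p * ξ x u)
    = Dx R x u p + lam x u p * R x u

/-- `u` is a twice differentiable solution on `J` of the Euler–Lagrange equation of `L`, with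
velocity `v`. Derivatives are taken within `J`, so that `J` may contain its endpoints, and
differentiability of the momentum `∂ₚL` along the solution is part of the equation. -/
structure IsExtremalOn (L : ℝ → ℝ → ℝ → ℝ) (u v : ℝ → ℝ) (J : Set ℝ) : Prop where
  hasDerivWithinAt : ∀ x ∈ J, HasDerivWithinAt u (v x) J x
  differentiableOn_velocity : DifferentiableOn ℝ v J
  eulerLagrange : ∀ x ∈ J,
    HasDerivWithinAt (fun t ↦ Lp L t (u t) (v t)) (Lu L x (u x) (v x)) J x

theorem isExtremalOn_deriv_of_contDiff {L : ℝ → ℝ → ℝ → ℝ} {u : ℝ → ℝ} {J : Set ℝ}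
    (hL : ContDiff ℝ 2 fun z : ℝ × ℝ × ℝ ↦ L z.1 z.2.1 z.2.2)
    (hu : ∀ x ∈ J, DifferentiableAt ℝ u x) (hu' : ∀ x ∈ J, DifferentiableAt ℝ (deriv u) x)
    (hEL : ∀ x ∈ J,
      deriv (fun t ↦ Lp L t (u t) (deriv u t)) x = Lu L x (u x) (deriv u x)) :
    IsExtremalOn L u (deriv u) J where
  hasDerivWithinAt x hx := (hu x hx).hasDerivAt.hasDerivWithinAt
  differentiableOn_velocity x hx := (hu' x hx).differentiableWithinAt
  eulerLagrange x hx := by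
    have momentum_differentiableAt :
        DifferentiableAt ℝ (fun t ↦ Lp L t (u t) (deriv u t)) x :=
      (differentiable_Lp hL _).comp (f := fun t ↦ (t, u t, deriv u t)) x
        (differentiableAt_id.prodMk ((hu x hx).prodMk (hu' x hx)))
    exact (momentum_differentiableAt.hasDerivAt.congr_deriv (hEL x hx)).hasDerivWithinAt

namespace IsExtremalOn

variable {L lam : ℝ → ℝ → ℝ → ℝ} {ξ η R : ℝ → ℝ → ℝ} {u v : ℝ → ℝ} {J : Set ℝ} {x : ℝ}

/-- The du Bois-Reymond equation. -/
theorem hasDerivWithinAt_energy (h : IsExtremalOn L u v J) (hx : x ∈ J)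
    (hL : DifferentiableAt ℝ (fun z : ℝ × ℝ × ℝ ↦ L z.1 z.2.1 z.2.2) (x, u x, v x)) :
    HasDerivWithinAt (fun t ↦ L t (u t) (v t) - v t * Lp L t (u t) (v t))
      (Lx L x (u x) (v x)) J x := by
  have hv := (h.differentiableOn_velocity x hx).hasDerivWithinAt
  refine ((hasDerivWithinAt_comp_jet hL (h.hasDerivWithinAt x hx) hv).sub
    (hv.mul (h.eulerLagrange x hx))).congr_deriv ?_
  ring

theorem hasDerivWithinAt_noetherI (h : IsExtremalOn L u v J) (hx : x ∈ J)
    (hL : DifferentiableAt ℝ (fun z : ℝ × ℝ × ℝ ↦ L z.1 z.2.1 z.2.2) (x, u x, v x))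
    (hξ : DifferentiableAt ℝ (fun z : ℝ × ℝ ↦ ξ z.1 z.2) (x, u x))
    (hη : DifferentiableAt ℝ (fun z : ℝ × ℝ ↦ η z.1 z.2) (x, u x))
    (hR : DifferentiableAt ℝ (fun z : ℝ × ℝ ↦ R z.1 z.2) (x, u x)) :
    HasDerivWithinAt (fun t ↦ NoetherI L ξ η R t (u t) (v t))
      (ξ x (u x) * Lx L x (u x) (v x) + η x (u x) * Lu L x (u x) (v x)
        + (Dx η x (u x) (v x) - v x * Dx ξ x (u x) (v x)) * Lp L x (u x) (v x)
        + L x (u x) (v x) * Dx ξ x (u x) (v x) - Dx R x (u x) (v x)) J x := by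
  have hu := h.hasDerivWithinAt x hx
  have energy_part :=
    (hasDerivWithinAt_comp_graph hξ hu).mul (h.hasDerivWithinAt_energy hx hL)
  have momentum_part := (hasDerivWithinAt_comp_graph hη hu).mul (h.eulerLagrange x hx)
  refine ((energy_part.add momentum_part).sub (hasDerivWithinAt_comp_graph hR hu)).congr_deriv ?_
  ring

theorem hasDerivWithinAt_noetherI_of_symmetry (h : IsExtremalOn L u v J) (hx : x ∈ J)
    (hsym : IsLambdaVariationalSymmetry L lam ξ η R)
    (hL : DifferentiableAt ℝ (fun z : ℝ × ℝ × ℝ ↦ L z.1 z.2.1 z.2.2) (x, u x, v x))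
    (hξ : DifferentiableAt ℝ (fun z : ℝ × ℝ ↦ ξ z.1 z.2) (x, u x))
    (hη : DifferentiableAt ℝ (fun z : ℝ × ℝ ↦ η z.1 z.2) (x, u x))
    (hR : DifferentiableAt ℝ (fun z : ℝ × ℝ ↦ R z.1 z.2) (x, u x)) :
    HasDerivWithinAt (fun t ↦ NoetherI L ξ η R t (u t) (v t))
      (-lam x (u x) (v x) * NoetherI L ξ η R x (u x) (v x)) J x := by
  refine (h.hasDerivWithinAt_noetherI hx hL hξ hη hR).congr_deriv ?_
  have symmetry_at_x := hsym x (u x) (v x)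
  rw [eta1] at symmetry_at_x
  rw [NoetherI]
  linear_combination symmetry_at_x

end IsExtremalOn

theorem lambda_variational_conditional_reduction_general
    {L lam : ℝ → ℝ → ℝ → ℝ} {ξ η R : ℝ → ℝ → ℝ}
    (hL : Differentiable ℝ fun z : ℝ × ℝ × ℝ ↦ L z.1 z.2.1 z.2.2)
    (hξ : Differentiable ℝ fun z : ℝ × ℝ ↦ ξ z.1 z.2)
    (hη : Differentiable ℝ fun z : ℝ × ℝ ↦ η z.1 z.2)
    (hR : Differentiable ℝ fun z : ℝ × ℝ ↦ R z.1 z.2)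
    (hlam : Continuous fun z : ℝ × ℝ × ℝ ↦ lam z.1 z.2.1 z.2.2)
    (hsym : IsLambdaVariationalSymmetry L lam ξ η R)
    {J : Set ℝ} (hJ : J.OrdConnected) {u v : ℝ → ℝ} (hu : IsExtremalOn L u v J)
    {x₀ : ℝ} (hx₀ : x₀ ∈ J) (hI₀ : NoetherI L ξ η R x₀ (u x₀) (v x₀) = 0) :
    ∀ x ∈ J, NoetherI L ξ η R x (u x) (v x) = 0 := by
  have hu_cont : ContinuousOn u J := fun x hx ↦ (hu.hasDerivWithinAt x hx).continuousWithinAt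
  have lam_cont : ContinuousOn (fun x ↦ lam x (u x) (v x)) J :=
    hlam.comp_continuousOn
      (continuousOn_id.prodMk (hu_cont.prodMk hu.differentiableOn_velocity.continuousOn))
  have noetherI_ode : ∀ x ∈ J, HasDerivWithinAt (fun t ↦ NoetherI L ξ η R t (u t) (v t))
      (-lam x (u x) (v x) * NoetherI L ξ η R x (u x) (v x)) J x := fun x hx ↦
    hu.hasDerivWithinAt_noetherI_of_symmetry hx hsym (hL _) (hξ _) (hη _) (hR _)
  exact eqOn_of_hasDerivWithinAt_linear (g := fun _ ↦ 0) hJ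
    (lam_cont.neg.smul (continuousOn_const (c := ContinuousLinearMap.id ℝ ℝ))) noetherI_ode
    (fun x _ ↦ by simpa using hasDerivWithinAt_const x J (0 : ℝ)) hx₀ hI₀

/-- Conditional reduction: for a divergence λ-variational symmetry of `L`, the hypersurface
`{I = 0}` is invariant along solutions of the Euler–Lagrange equation: if `I` vanishes at one
point of a solution, it vanishes identically along that solution. -/
theorem lambda_variational_conditional_reduction
    (L lam : ℝ → ℝ → ℝ → ℝ) (ξ η R : ℝ → ℝ → ℝ)
    (hL : ContDiff ℝ (⊤ : ℕ∞) fun z : ℝ × ℝ × ℝ => L z.1 z.2.1 z.2.2)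
    (hξ : ContDiff ℝ (⊤ : ℕ∞) fun z : ℝ × ℝ => ξ z.1 z.2)
    (hη : ContDiff ℝ (⊤ : ℕ∞) fun z : ℝ × ℝ => η z.1 z.2)
    (hR : ContDiff ℝ (⊤ : ℕ∞) fun z : ℝ × ℝ => R z.1 z.2)
    (hlam : ContDiff ℝ (⊤ : ℕ∞) fun z : ℝ × ℝ × ℝ => lam z.1 z.2.1 z.2.2)
    (hsym : ∀ x u p : ℝ,
      ξ x u * Lx L x u p + η x u * Lu L x u p + eta1 ξ η lam x u p * Lp L x u p
        + L x u p * (Dx ξ x u p + lam x u p * ξ x u)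
      = Dx R x u p + lam x u p * R x u)
    (J : Set ℝ) (hJopen : IsOpen J) (hJconn : J.OrdConnected)
    (u : ℝ → ℝ)
    (hu1 : ∀ x ∈ J, DifferentiableAt ℝ u x)
    (hu2 : ∀ x ∈ J, DifferentiableAt ℝ (deriv u) x)
    (hu2c : ContinuousOn (deriv u) J)
    (hEL : ∀ x ∈ J,
      deriv (fun t => Lp L t (u t) (deriv u t)) x = Lu L x (u x) (deriv u x))
    (x₀ : ℝ) (hx₀ : x₀ ∈ J)
    (hI₀ : NoetherI L ξ η R x₀ (u x₀) (deriv u x₀) = 0) :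
    ∀ x ∈ J, NoetherI L ξ η R x (u x) (deriv u x) = 0 := by
  have hu : IsExtremalOn L u (deriv u) J :=
    isExtremalOn_deriv_of_contDiff (contDiff_infty.1 hL 2) hu1 hu2 hEL
  exact lambda_variational_conditional_reduction_general (hL.differentiable (by simp))
    (hξ.differentiable (by simp)) (hη.differentiable (by simp)) (hR.differentiable (by simp))
    hlam.continuous hsym hJconn hu hx₀ hI₀
end

section
/- Let J ⊆ ℝ be an open interval and let u : J → ℝ be twice differentiable with continuous derivative, with u(x) > 0 for all x ∈ J, satisfying u''(x) = x²·ln u(x)/u(x) − x²/u(x) + ln u(x) − 1 for all x ∈ J. If u'(x₀) = x₀·ln u(x₀) − x₀ for some x₀ ∈ J, then u'(x) = x·ln u(x) − x for all x ∈ J. -/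
/-! A nowhere vanishing integrating factor `exp (-∫ a)` makes every solution of `y' = a y` a
multiple of `exp (∫ a)`, so that a single zero forces `y = 0`. The nonlinear second-order equation
enters only through the Noether-type function `I = u' - x ln u + x`: along solutions it satisfies
such a linear equation, namely `I' = -(x / u) I`. -/

section LinearODE

variable {E : Type*} [NormedAddCommGroup E] [NormedSpace ℝ E]
  {J : Set ℝ} {a : ℝ → ℝ} {y : ℝ → E} {x₀ x : ℝ}

theorem hasDerivAt_integral_of_continuousOn [CompleteSpace E] {f : ℝ → E}
    (hJ : IsOpen J) (hJc : J.OrdConnected) (hf : ContinuousOn f J) (hx₀ : x₀ ∈ J) (hx : x ∈ J) :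
    HasDerivAt (fun t ↦ ∫ s in x₀..t, f s) (f x) x :=
  intervalIntegral.integral_hasDerivAt_right
    (hf.mono (hJc.uIcc_subset hx₀ hx)).intervalIntegrable
    (hf.stronglyMeasurableAtFilter hJ x hx) (hf.continuousAt (hJ.mem_nhds hx))

theorem eq_exp_integral_smul_of_hasDerivAt_smul (hJ : IsOpen J) (hJc : J.OrdConnected)
    (ha : ContinuousOn a J) (hy : ∀ t ∈ J, HasDerivAt y (a t • y t) t)
    (hx₀ : x₀ ∈ J) (hx : x ∈ J) :
    y x = Real.exp (∫ t in x₀..x, a t) • y x₀ := by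
  have hderiv : ∀ t ∈ J, HasDerivAt (fun t ↦ Real.exp (-∫ s in x₀..t, a s) • y t) 0 t := by
    intro t ht
    have hexp := (hasDerivAt_integral_of_continuousOn hJ hJc ha hx₀ ht).fun_neg.exp
    refine (hexp.fun_smul (hy t ht)).congr_deriv ?_
    module
  have hconst : Real.exp (-∫ t in x₀..x, a t) • y x = y x₀ := by
    simpa using hJ.is_const_of_deriv_eq_zero hJc.isPreconnected
      (fun t ht ↦ (hderiv t ht).differentiableAt.differentiableWithinAt)
      (fun t ht ↦ (hderiv t ht).deriv) hx hx₀
  rw [← hconst, smul_smul, ← Real.exp_add, add_neg_cancel, Real.exp_zero, one_smul]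

theorem eqOn_zero_of_hasDerivAt_smul (hJ : IsOpen J) (hJc : J.OrdConnected)
    (ha : ContinuousOn a J) (hy : ∀ t ∈ J, HasDerivAt y (a t • y t) t)
    (hx₀ : x₀ ∈ J) (hy₀ : y x₀ = 0) : Set.EqOn y 0 J := fun x hx ↦ by
  rw [eq_exp_integral_smul_of_hasDerivAt_smul hJ hJc ha hy hx₀ hx, hy₀, smul_zero,
    Pi.zero_apply]

end LinearODE

/-- The Noether-type function `I(x, u, u₁) = u₁ - x ln u + x` on the first jet space, attached to
the `λ`-variational symmetry `∂_u` with `λ = x / u`; its zero set is the reduced first-order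
equation. -/
noncomputable def noetherFunction (x u u₁ : ℝ) : ℝ :=
  u₁ - x * Real.log u + x

theorem noetherFunction_eq_zero_iff {x u u₁ : ℝ} :
    noetherFunction x u u₁ = 0 ↔ u₁ = x * Real.log u - x := by
  rw [noetherFunction, sub_add, sub_eq_zero]

theorem hasDerivAt_noetherFunction {u : ℝ → ℝ} {x : ℝ} (hu : DifferentiableAt ℝ u x)
    (hu' : DifferentiableAt ℝ (deriv u) x) (hne : u x ≠ 0)
    (hode : deriv (deriv u) x
      = x ^ 2 * Real.log (u x) / u x - x ^ 2 / u x + Real.log (u x) - 1) :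
    HasDerivAt (fun t ↦ noetherFunction t (u t) (deriv u t))
      (-(x / u x) * noetherFunction x (u x) (deriv u x)) x := by
  have hxlog : HasDerivAt (fun t ↦ t * Real.log (u t))
      (Real.log (u x) + x * (deriv u x / u x)) x := by
    simpa only [one_mul] using (hasDerivAt_id' x).fun_mul (hu.hasDerivAt.log hne)
  refine ((hu'.hasDerivAt.fun_sub hxlog).fun_add (hasDerivAt_id' x)).congr_deriv ?_
  calc deriv (deriv u) x - (Real.log (u x) + x * (deriv u x / u x)) + 1
      = x ^ 2 * Real.log (u x) / u x - x ^ 2 / u x - x * (deriv u x / u x) := by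
        rw [hode]; ring
    _ = -(x / u x) * noetherFunction x (u x) (deriv u x) := by
        rw [noetherFunction]; ring

/-- Conditional reduction for the example: if a positive solution of
`u'' = x² ln u / u − x²/u + ln u − 1` (twice differentiable with continuous derivative)
satisfies `u'(x₀) = x₀ ln u(x₀) − x₀` at a single point `x₀`, then it satisfies the reduced
first-order equation `u' = x ln u − x` on the whole interval. -/
theorem example_conditional_reduction
    (J : Set ℝ) (hJopen : IsOpen J) (hJconn : J.OrdConnected)
    (u : ℝ → ℝ)
    (hu1 : ∀ x ∈ J, DifferentiableAt ℝ u x)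
    (hu2 : ∀ x ∈ J, DifferentiableAt ℝ (deriv u) x)
    (hu2c : ContinuousOn (deriv u) J)
    (hupos : ∀ x ∈ J, 0 < u x)
    (hode : ∀ x ∈ J, deriv (deriv u) x
      = x ^ 2 * Real.log (u x) / u x - x ^ 2 / u x + Real.log (u x) - 1)
    (x₀ : ℝ) (hx₀ : x₀ ∈ J)
    (hI₀ : deriv u x₀ = x₀ * Real.log (u x₀) - x₀) :
    ∀ x ∈ J, deriv u x = x * Real.log (u x) - x := by
  have hI : ∀ x ∈ J, HasDerivAt (fun t ↦ noetherFunction t (u t) (deriv u t))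
      (-(x / u x) * noetherFunction x (u x) (deriv u x)) x := fun x hx ↦
    hasDerivAt_noetherFunction (hu1 x hx) (hu2 x hx) (hupos x hx).ne' (hode x hx)
  have hlam : ContinuousOn (fun x ↦ -(x / u x)) J :=
    (continuousOn_id.div (fun x hx ↦ (hu1 x hx).continuousAt.continuousWithinAt)
      fun x hx ↦ (hupos x hx).ne').neg
  have hI_zero := eqOn_zero_of_hasDerivAt_smul hJopen hJconn hlam hI hx₀
    (noetherFunction_eq_zero_iff.mpr hI₀)
  exact fun x hx ↦ noetherFunction_eq_zero_iff.mp (hI_zero hx)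
end
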